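/- arXiv:1307.8281 — 2 statements merged into one kernel-verified Lean document; each statement's English description precedes it below -/
import Mathlib

section
/- Let A ⊆ ℝ and W ⊆ ℝ with frontier(A) ⊆ W, and let q ∈ ℝ satisfy q < w for every w ∈ W. Then q ∈ A if and only if A is not bounded below. -/
/-- If `frontier A ⊆ W` and `q` is strictly below every element of `W`, then
`q ∈ A` iff `A` is not bounded below. -/
theorem statement_13 (A W : Set ℝ) (hfr : frontier A ⊆ W) (q : ℝ)
    (hq : ∀ w ∈ W, q < w) :
    q ∈ A ↔ ¬ BddBelow A := by
  have key : ∀ x ≤ q, ∀ y ≤ q, x ∈ A → y ∈ A := by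
    intro x hx y hy hxA
    by_contra hyA
    have hne : (Set.Iic q ∩ frontier A).Nonempty := by
      by_contra hemp
      have hdis : ∀ z ≤ q, z ∉ frontier A := fun z hz hzf => hemp ⟨z, hz, hzf⟩
      obtain ⟨z, hz, hz1, hz2⟩ := (isPreconnected_Iic (a := q)) (interior A) (closure A)ᶜ
        isOpen_interior isClosed_closure.isOpen_compl
        (by
          intro z hz
          by_cases h : z ∈ interior A
          · exact Or.inl h
          · exact Or.inr fun hc => hdis z hz ⟨hc, h⟩)
        ⟨x, hx, by
          by_contra h
          exact hdis x hx ⟨subset_closure hxA, h⟩⟩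
        ⟨y, hy, fun hc => hdis y hy ⟨hc, fun hi => hyA (interior_subset hi)⟩⟩
      exact hz2 (subset_closure (interior_subset hz1))
    obtain ⟨z, hz, hzf⟩ := hne
    exact absurd (hq z (hfr hzf)) (not_lt.mpr hz)
  constructor
  · rintro hqA ⟨b, hb⟩
    have h1 : min q b - 1 ≤ q := by linarith [min_le_left q b]
    have h2 := hb (key q le_rfl _ h1 hqA)
    linarith [min_le_right q b]
  · intro h
    by_contra hqA
    exact h ⟨q, fun x hx => by
      by_contra hlt
      exact hqA (key x (not_le.mp hlt).le q le_rfl hx)⟩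
end

section
/- Let f : ℝⁿ → ℝ be continuous, S ⊆ ℝⁿ closed, T ⊆ S, and let E ⊆ ℝ and B ⊆ ℝ be finite sets. Assume that for every t ∈ ℝ ∖ E, the fiber f⁻¹(t) ∩ S is empty if and only if f⁻¹(t) ∩ T is empty. Let ℓ ∈ ℝ with ℓ ∈ closure(f(S)) and ℓ ∉ f(S). Then there exists a sequence (x_k) of points of T such that f(x_k) ∉ B for all k, ‖x_k‖ → ∞, and f(x_k) → ℓ. -/
open Filter Topology

/-- If away from a finite set `E` the fibers of `f` over the closed set `S` and
over `T ⊆ S` are simultaneously empty or not, and `ℓ` is in the closure of `f(S)` but not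
attained on `S`, then there is a sequence in `T` avoiding the finite set `B` of values, with
norms tending to infinity, along which `f` tends to `ℓ`. -/
theorem statement_15 (n : ℕ) (f : EuclideanSpace ℝ (Fin n) → ℝ) (hf : Continuous f)
    (S T : Set (EuclideanSpace ℝ (Fin n))) (hS : IsClosed S) (hTS : T ⊆ S)
    (E B : Set ℝ) (hE : E.Finite) (hB : B.Finite)
    (hfib : ∀ t : ℝ, t ∉ E → ({x ∈ S | f x = t} = ∅ ↔ {x ∈ T | f x = t} = ∅))
    (ℓ : ℝ) (hcl : ℓ ∈ closure (f '' S)) (hna : ℓ ∉ f '' S) :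
    ∃ x : ℕ → EuclideanSpace ℝ (Fin n), (∀ k, x k ∈ T) ∧ (∀ k, f (x k) ∉ B) ∧
      Tendsto (fun k => ‖x k‖) atTop atTop ∧
      Tendsto (fun k => f (x k)) atTop (𝓝 ℓ) := by
  have key : ∀ k : ℕ, ∃ x ∈ T, f x ∉ B ∧ (k : ℝ) ≤ ‖x‖ ∧ dist (f x) ℓ < 1 / ((k : ℝ) + 1) := by
    intro k
    have hK : IsClosed (f '' (S ∩ Metric.closedBall 0 (k : ℝ))) :=
      (((isCompact_closedBall _ _).inter_left hS).image hf).isClosed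
    have hF : IsClosed ((E ∪ B) \ {ℓ}) := ((hE.union hB).subset Set.diff_subset).isClosed
    have h1 : (f '' (S ∩ Metric.closedBall 0 (k : ℝ)))ᶜ ∈ 𝓝 ℓ :=
      hK.isOpen_compl.mem_nhds (fun h => hna (Set.image_mono Set.inter_subset_left h))
    have h2 : ((E ∪ B) \ {ℓ})ᶜ ∈ 𝓝 ℓ := hF.isOpen_compl.mem_nhds (fun h => h.2 rfl)
    have h3 : Metric.ball ℓ (1 / ((k : ℝ) + 1)) ∈ 𝓝 ℓ := Metric.ball_mem_nhds _ (by positivity)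
    obtain ⟨t, ⟨⟨ht1, ht2⟩, ht3⟩, htS⟩ :=
      mem_closure_iff_nhds.1 hcl _ (inter_mem (inter_mem h1 h2) h3)
    have htl : t ≠ ℓ := fun h => hna (h ▸ htS)
    have htEB : t ∉ E ∪ B := fun h => ht2 ⟨h, htl⟩
    obtain ⟨y, hyS, hy⟩ := htS
    have hne : {x ∈ T | f x = t} ≠ ∅ := by
      intro h
      have h' := (hfib t (fun h => htEB (Or.inl h))).2 h
      exact Set.eq_empty_iff_forall_notMem.1 h' y ⟨hyS, hy⟩
    obtain ⟨x, hxT, rfl⟩ := Set.nonempty_iff_ne_empty.2 hne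
    refine ⟨x, hxT, fun h => htEB (Or.inr h), ?_, ht3⟩
    by_contra hlt
    exact ht1 ⟨x, ⟨hTS hxT, by simpa using (not_le.1 hlt).le⟩, rfl⟩
  choose x hxT hxB hxn hxd using key
  refine ⟨x, hxT, hxB, tendsto_atTop_mono hxn tendsto_natCast_atTop_atTop, ?_⟩
  rw [tendsto_iff_dist_tendsto_zero]
  exact squeeze_zero (fun _ => dist_nonneg) (fun k => (hxd k).le)
    tendsto_one_div_add_atTop_nhds_zero_nat
end
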